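/- Let A, B be nonzero real numbers and α, β ∈ ℝ, and let p, q be coprime integers with A·q = B·p (i.e., A/B = p/q). If p is even or q is even, then (1/T)·∫₀ᵀ Φ(A·t − α, B·t − β) dt → 0 as T → ∞, where Φ(u,v) = sgn(cos(2πu)·cos(2πv)). -/

import Mathlib

open Filter Real MeasureTheory

noncomputable def sgn (t : ℝ) : ℝ := if 0 < t then 1 else if t < 0 then -1 else 0

noncomputable def Φ (u v : ℝ) : ℝ := sgn (Real.cos (2 * π * u) * Real.cos (2 * π * v))

/-!
Along the line `t ↦ (A t - α, B t - β)` there is a time `S` that advances the two arguments of `Φ`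
by `p / 2` and `q / 2`, and so multiplies the two cosines by `(-1) ^ p` and `(-1) ^ q`. When `p + q`
is odd the integrand is therefore antiperiodic with antiperiod `S`. Its time average converges to
its mean over the period `2 S`, in which the two half-periods cancel.
-/

section TimeAverage

variable {E : Type*} [NormedAddCommGroup E] [NormedSpace ℝ E] {f : ℝ → E} {c : ℝ}

theorem periodic_intervalIntegral_sub_smul (hf : Function.Periodic f c) (hc : c ≠ 0)
    (hint : IntervalIntegrable f volume 0 c) :
    Function.Periodic (fun T => (∫ t in 0..T, f t) - T • c⁻¹ • ∫ t in 0..c, f t) c := by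
  intro T
  have hadd : ∫ t in 0..T + c, f t = (∫ t in 0..T, f t) + ∫ t in 0..c, f t := by
    simpa only [zero_add] using hf.intervalIntegral_add_eq_add 0 T (hf.intervalIntegrable₀ hc hint)
  simp only [hadd, add_smul, smul_inv_smul₀ hc, add_sub_add_right_eq_sub]

theorem tendsto_timeAverage_of_periodic (hf : Function.Periodic f c) (hc : c ≠ 0)
    (hint : IntervalIntegrable f volume 0 c) :
    Tendsto (fun T : ℝ => T⁻¹ • ∫ t in 0..T, f t) atTop (nhds (c⁻¹ • ∫ t in 0..c, f t)) := by
  set m : E := c⁻¹ • ∫ t in 0..c, f t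
  have hcont : Continuous fun T : ℝ => (∫ t in 0..T, f t) - T • m :=
    (intervalIntegral.continuous_primitive (hf.intervalIntegrable₀ hc hint) 0).sub (by fun_prop)
  obtain ⟨C, hC⟩ := ((periodic_intervalIntegral_sub_smul hf hc hint).isBounded_of_continuous hc
    hcont).exists_norm_le
  have hzero : Tendsto (fun T : ℝ => T⁻¹ • ((∫ t in 0..T, f t) - T • m)) atTop (nhds 0) :=
    tendsto_inv_atTop_zero.zero_smul_isBoundedUnder_le
      (isBoundedUnder_of ⟨C, fun T => hC _ (Set.mem_range_self T)⟩)
  refine tendsto_sub_nhds_zero_iff.mp (hzero.congr' ?_)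
  filter_upwards [eventually_ne_atTop 0] with T hT
  rw [smul_sub, inv_smul_smul₀ hT]

theorem intervalIntegral_two_mul_eq_zero_of_antiperiodic (hf : Function.Antiperiodic f c)
    (hint : ∀ a b, IntervalIntegrable f volume a b) : ∫ t in 0..2 * c, f t = 0 := by
  have hhalf : ∫ t in c..2 * c, f t = -∫ t in 0..c, f t := by
    calc ∫ t in c..2 * c, f t = ∫ t in 0..c, f (t + c) := by
          rw [intervalIntegral.integral_comp_add_right, zero_add, two_mul]
      _ = -∫ t in 0..c, f t := by simp only [hf _, intervalIntegral.integral_neg]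
  rw [← intervalIntegral.integral_add_adjacent_intervals (hint 0 c) (hint c (2 * c)), hhalf,
    add_neg_cancel]

theorem tendsto_timeAverage_zero_of_antiperiodic (hf : Function.Antiperiodic f c) (hc : c ≠ 0)
    (hint : IntervalIntegrable f volume 0 (2 * c)) :
    Tendsto (fun T : ℝ => T⁻¹ • ∫ t in 0..T, f t) atTop (nhds 0) := by
  have hper : Function.Periodic f (2 * c) := hf.periodic_two_mul
  have hc2 : 2 * c ≠ 0 := mul_ne_zero two_ne_zero hc
  have hmean : ∫ t in 0..2 * c, f t = 0 :=
    intervalIntegral_two_mul_eq_zero_of_antiperiodic hf (hper.intervalIntegrable₀ hc2 hint)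
  simpa only [hmean, smul_zero] using tendsto_timeAverage_of_periodic hper hc2 hint

end TimeAverage

section SignOfCosines

theorem sgn_neg (t : ℝ) : sgn (-t) = -sgn t := by
  unfold sgn
  split_ifs <;> linarith

theorem abs_sgn_le_one (t : ℝ) : |sgn t| ≤ 1 := by
  unfold sgn
  split_ifs <;> simp

theorem measurable_sgn : Measurable sgn :=
  Measurable.ite measurableSet_Ioi measurable_const
    (Measurable.ite measurableSet_Iio measurable_const measurable_const)

theorem intervalIntegrable_Φ_comp {u v : ℝ → ℝ} (hu : Measurable u) (hv : Measurable v)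
    (a b : ℝ) : IntervalIntegrable (fun t => Φ (u t) (v t)) volume a b := by
  have hmeas : Measurable fun t => Φ (u t) (v t) := measurable_sgn.comp (by fun_prop)
  refine (intervalIntegrable_const (c := (1 : ℝ))).mono_fun hmeas.aestronglyMeasurable
    (Eventually.of_forall fun t => ?_)
  rw [norm_one]
  exact abs_sgn_le_one _

theorem Φ_add_int_div_two {p q : ℤ} (hodd : Odd (p + q)) (u v : ℝ) :
    Φ (u + p / 2) (v + q / 2) = -Φ u v := by
  have hcos (w : ℝ) (n : ℤ) :
      Real.cos (2 * π * (w + n / 2)) = (-1) ^ n * Real.cos (2 * π * w) := by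
    rw [← Real.cos_add_int_mul_pi]
    ring_nf
  have hsign : (-1 : ℝ) ^ p * (-1) ^ q = -1 := by
    rw [← zpow_add₀ (by norm_num), hodd.neg_one_zpow]
  unfold Φ
  rw [hcos, hcos, mul_mul_mul_comm, hsign, neg_one_mul, sgn_neg]

theorem antiperiodic_Φ_line {A B S : ℝ} {p q : ℤ} (hAS : A * S = p / 2) (hBS : B * S = q / 2)
    (hodd : Odd (p + q)) (α β : ℝ) :
    Function.Antiperiodic (fun t => Φ (A * t - α) (B * t - β)) S := by
  intro t
  simp only [mul_add, hAS, hBS, add_sub_right_comm, Φ_add_int_div_two hodd]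

end SignOfCosines

theorem exists_mul_eq_and_mul_eq {K : Type*} [Field K] {a b x y : K} (hab : a ≠ 0 ∨ b ≠ 0)
    (h : a * y = b * x) : ∃ s, a * s = x ∧ b * s = y := by
  rcases hab with ha | hb
  · exact ⟨x / a, mul_div_cancel₀ x ha, by rw [← mul_div_assoc, ← h, mul_div_cancel_left₀ y ha]⟩
  · exact ⟨y / b, by rw [← mul_div_assoc, h, mul_div_cancel_left₀ x hb], mul_div_cancel₀ y hb⟩

theorem odd_add_of_isCoprime {p q : ℤ} (hcop : IsCoprime p q) (heven : Even p ∨ Even q) :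
    Odd (p + q) := by
  by_contra hsum
  rw [Int.not_odd_iff_even, Int.even_add] at hsum
  have hboth : Even p ∧ Even q := by tauto
  exact absurd (hcop.isUnit_of_dvd' hboth.1.two_dvd hboth.2.two_dvd) (by decide)

theorem time_average_even_case_general {A B : ℝ} (hAB : A ≠ 0 ∨ B ≠ 0) (α β : ℝ)
    {p q : ℤ} (hpq : A * (q : ℝ) = B * (p : ℝ)) (hodd : Odd (p + q)) :
    Tendsto (fun T : ℝ => (1 / T) * ∫ t in (0 : ℝ)..T, Φ (A * t - α) (B * t - β))
      atTop (nhds 0) := by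
  obtain ⟨S, hAS, hBS⟩ : ∃ S : ℝ, A * S = p / 2 ∧ B * S = q / 2 :=
    exists_mul_eq_and_mul_eq hAB (by linear_combination hpq / 2)
  have hS : S ≠ 0 := by
    rintro rfl
    have hp : p = 0 := by simpa using hAS.symm
    have hq : q = 0 := by simpa using hBS.symm
    simp [hp, hq] at hodd
  simpa only [one_div, smul_eq_mul] using
    tendsto_timeAverage_zero_of_antiperiodic (antiperiodic_Φ_line hAS hBS hodd α β) hS
      (intervalIntegrable_Φ_comp (by fun_prop) (by fun_prop) _ _)

theorem time_average_even_case
    (A B : ℝ) (hA : A ≠ 0) (hB : B ≠ 0) (α β : ℝ)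
    (p q : ℤ) (hcop : IsCoprime p q) (hpq : A * (q : ℝ) = B * (p : ℝ))
    (heven : Even p ∨ Even q) :
    Tendsto (fun T : ℝ => (1 / T) * ∫ t in (0:ℝ)..T, Φ (A * t - α) (B * t - β))
      atTop (nhds 0) :=
  time_average_even_case_general (.inl hA) α β hpq (odd_add_of_isCoprime hcop heven)
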